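/- For every (d1,d2) ∈ ℝ₊², the rate-distortion function at one maximal distortion collapses to a conditional RD function: R(d1, d2max) = R_{X|Y}(d1) and R(d1max, d2) = R_{Y|X}(d2), where d1max and d2max are the maximal values of δ1 and δ2 respectively. -/

import Mathlib

open scoped BigOperators Classical

noncomputable section

namespace TWR

/-- Base-2 Shannon entropy of a finitely supported distribution (with the
convention `0 * log 0 = 0`, automatic since `Real.logb 2 0 = 0`). -/
def H2 {α : Type} [Fintype α] (p : α → ℝ) : ℝ :=
  -∑ a, p a * Real.logb 2 (p a)

/-- `p` is a probability mass function. -/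
def IsPmf {α : Type} [Fintype α] (p : α → ℝ) : Prop :=
  (∀ a, 0 ≤ p a) ∧ ∑ a, p a = 1

/-- `W` is a conditional pmf. -/
def IsCondPmf {α β : Type} [Fintype β] (W : α → β → ℝ) : Prop :=
  ∀ a, IsPmf (W a)

/-- Mutual information `I(A;B)` (base 2) of a joint pmf on `α × β`. -/
def MI {α β : Type} [Fintype α] [Fintype β] (p : α × β → ℝ) : ℝ :=
  H2 (fun a => ∑ b, p (a, b)) + H2 (fun b => ∑ a, p (a, b)) - H2 p

/-- Conditional entropy `H(A|B)` of a joint pmf on `α × β`. -/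
def condH {α β : Type} [Fintype α] [Fintype β] (p : α × β → ℝ) : ℝ :=
  H2 p - H2 (fun b => ∑ a, p (a, b))

/-- Conditional mutual information `I(A;C|B)` of a joint pmf on `α × β × γ`,
conditioning on the middle coordinate (`I(A;C|B) = H(A,B)+H(B,C)-H(A,B,C)-H(B)`). -/
def condMI {α β γ : Type} [Fintype α] [Fintype β] [Fintype γ] (p : α × β × γ → ℝ) : ℝ :=
  H2 (fun ab : α × β => ∑ c, p (ab.1, ab.2, c)) +
    H2 (fun bc : β × γ => ∑ a, p (a, bc.1, bc.2)) -
    H2 p - H2 (fun b : β => ∑ a, ∑ c, p (a, b, c))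

/-- Markov chain `A − B − C` for a joint pmf on `α × β × γ`. -/
def Markov {α β γ : Type} [Fintype α] [Fintype β] [Fintype γ] (p : α × β × γ → ℝ) : Prop :=
  ∀ a b c, p (a, b, c) * (∑ a', ∑ c', p (a', b, c')) =
    (∑ c', p (a, b, c')) * (∑ a', p (a', b, c))

variable {𝒳 𝒴 Xh Yh 𝒲 𝒰 𝒱 : Type}
variable [Fintype 𝒳] [Fintype 𝒴] [Fintype Xh] [Fintype Yh]
variable [Fintype 𝒲] [Fintype 𝒰] [Fintype 𝒱]

/-- The i.i.d. block source. -/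
def iid (q : 𝒳 × 𝒴 → ℝ) (n : ℕ) : (Fin n → 𝒳) × (Fin n → 𝒴) → ℝ :=
  fun xy => ∏ i, q (xy.1 i, xy.2 i)

/-- Average distortion at receiver 1 of the RD code `(f, g1, ·)`. -/
def Delta1 (q : 𝒳 × 𝒴 → ℝ) (δ1 : 𝒳 → Xh → ℝ) {n m : ℕ}
    (f : (Fin n → 𝒳) × (Fin n → 𝒴) → Fin m)
    (g1 : Fin m × (Fin n → 𝒴) → Fin n → Xh) : ℝ :=
  ∑ xy : (Fin n → 𝒳) × (Fin n → 𝒴),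
    iid q n xy * ((n : ℝ)⁻¹ * ∑ i, δ1 (xy.1 i) (g1 (f xy, xy.2) i))

/-- Average distortion at receiver 2 of the RD code `(f, ·, g2)`. -/
def Delta2 (q : 𝒳 × 𝒴 → ℝ) (δ2 : 𝒴 → Yh → ℝ) {n m : ℕ}
    (f : (Fin n → 𝒳) × (Fin n → 𝒴) → Fin m)
    (g2 : Fin m × (Fin n → 𝒳) → Fin n → Yh) : ℝ :=
  ∑ xy : (Fin n → 𝒳) × (Fin n → 𝒴),
    iid q n xy * ((n : ℝ)⁻¹ * ∑ i, δ2 (xy.2 i) (g2 (f xy, xy.1) i))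

/-- `r` is a `(d1,d2)`-achievable rate (source coding). -/
def RDAchievable (q : 𝒳 × 𝒴 → ℝ) (δ1 : 𝒳 → Xh → ℝ) (δ2 : 𝒴 → Yh → ℝ)
    (d1 d2 r : ℝ) : Prop :=
  ∀ ε > (0 : ℝ), ∃ (n m : ℕ) (f : (Fin n → 𝒳) × (Fin n → 𝒴) → Fin m)
    (g1 : Fin m × (Fin n → 𝒴) → Fin n → Xh)
    (g2 : Fin m × (Fin n → 𝒳) → Fin n → Yh),
    0 < n ∧ Real.logb 2 m / n ≤ r + ε ∧
    Delta1 q δ1 f g1 ≤ d1 + ε ∧ Delta2 q δ2 f g2 ≤ d2 + ε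

/-- The rate-distortion function `R(d1,d2)`. -/
def RD (q : 𝒳 × 𝒴 → ℝ) (δ1 : 𝒳 → Xh → ℝ) (δ2 : 𝒴 → Yh → ℝ) (d1 d2 : ℝ) : ℝ :=
  sInf {r : ℝ | 0 ≤ r ∧ RDAchievable q δ1 δ2 d1 d2 r}

/-- `r` is `(d1,d2)`-achievable with common reconstructions. -/
def CRAchievable (q : 𝒳 × 𝒴 → ℝ) (δ1 : 𝒳 → Xh → ℝ) (δ2 : 𝒴 → Yh → ℝ)
    (d1 d2 r : ℝ) : Prop :=
  ∀ ε > (0 : ℝ), ∃ (n m : ℕ) (f : (Fin n → 𝒳) × (Fin n → 𝒴) → Fin m)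
    (g1 : Fin m × (Fin n → 𝒴) → Fin n → Xh)
    (g2 : Fin m × (Fin n → 𝒳) → Fin n → Yh)
    (φ1 : Fin m × (Fin n → 𝒴) → Fin n → Yh)
    (φ2 : Fin m × (Fin n → 𝒳) → Fin n → Xh),
    0 < n ∧ Real.logb 2 m / n ≤ r + ε ∧
    Delta1 q δ1 f g1 ≤ d1 + ε ∧ Delta2 q δ2 f g2 ≤ d2 + ε ∧
    (∑ xy : (Fin n → 𝒳) × (Fin n → 𝒴),
      if φ2 (f xy, xy.1) = g1 (f xy, xy.2) then 0 else iid q n xy) ≤ ε ∧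
    (∑ xy : (Fin n → 𝒳) × (Fin n → 𝒴),
      if φ1 (f xy, xy.2) = g2 (f xy, xy.1) then 0 else iid q n xy) ≤ ε

/-- The common-reconstruction rate-distortion function `R_CR(d1,d2)`. -/
def CRRD (q : 𝒳 × 𝒴 → ℝ) (δ1 : 𝒳 → Xh → ℝ) (δ2 : 𝒴 → Yh → ℝ) (d1 d2 : ℝ) : ℝ :=
  sInf {r : ℝ | 0 ≤ r ∧ CRAchievable q δ1 δ2 d1 d2 r}

/-- The conditional rate-distortion function `R_{X|Y}(d1)`. -/
def condRD (q : 𝒳 × 𝒴 → ℝ) (δ1 : 𝒳 → Xh → ℝ) (d1 : ℝ) : ℝ :=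
  sInf {r : ℝ | ∃ W : 𝒳 × 𝒴 → Xh → ℝ, IsCondPmf W ∧
    (∑ x, ∑ y, ∑ xh, q (x, y) * W (x, y) xh * δ1 x xh) ≤ d1 ∧
    r = condMI (fun t : 𝒳 × 𝒴 × Xh => q (t.1, t.2.1) * W (t.1, t.2.1) t.2.2)}

/-- Swap the two components of a joint source. -/
def swap (q : 𝒳 × 𝒴 → ℝ) : 𝒴 × 𝒳 → ℝ := fun t => q (t.2, t.1)

/-- The marginal rate-distortion function `R_X(d)`. -/
def margRD (qX : 𝒳 → ℝ) (δ1 : 𝒳 → Xh → ℝ) (d1 : ℝ) : ℝ :=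
  sInf {r : ℝ | ∃ W : 𝒳 → Xh → ℝ, IsCondPmf W ∧
    (∑ x, ∑ xh, qX x * W x xh * δ1 x xh) ≤ d1 ∧
    r = MI (fun t : 𝒳 × Xh => qX t.1 * W t.1 t.2)}

def margX (q : 𝒳 × 𝒴 → ℝ) : 𝒳 → ℝ := fun x => ∑ y, q (x, y)
def margY (q : 𝒳 × 𝒴 → ℝ) : 𝒴 → ℝ := fun y => ∑ x, q (x, y)

/-- The joint rate-distortion function `R_{XY}(d1,d2)`. -/
def jointRD (q : 𝒳 × 𝒴 → ℝ) (δ1 : 𝒳 → Xh → ℝ) (δ2 : 𝒴 → Yh → ℝ) (d1 d2 : ℝ) : ℝ :=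
  sInf {r : ℝ | ∃ W : 𝒳 × 𝒴 → Xh × Yh → ℝ, IsCondPmf W ∧
    (∑ xy : 𝒳 × 𝒴, ∑ z : Xh × Yh, q xy * W xy z * δ1 xy.1 z.1) ≤ d1 ∧
    (∑ xy : 𝒳 × 𝒴, ∑ z : Xh × Yh, q xy * W xy z * δ2 xy.2 z.2) ≤ d2 ∧
    r = MI (fun t : (𝒳 × 𝒴) × (Xh × Yh) => q t.1 * W t.1 t.2)}

/-- The Wyner–Ziv rate-distortion function `R^{WZ}_{X|Y}(d1)`
(with auxiliary alphabet of cardinality `|𝒳| + 1`). -/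
def wzRD (q : 𝒳 × 𝒴 → ℝ) (δ1 : 𝒳 → Xh → ℝ) (d1 : ℝ) : ℝ :=
  sInf {r : ℝ | ∃ p : Fin (Fintype.card 𝒳 + 1) × 𝒳 × 𝒴 → ℝ, IsPmf p ∧
    (∀ x y, (∑ a, p (a, x, y)) = q (x, y)) ∧ Markov p ∧
    (∃ π1 : Fin (Fintype.card 𝒳 + 1) × 𝒴 → Xh,
      (∑ a, ∑ x, ∑ y, p (a, x, y) * δ1 x (π1 (a, y))) ≤ d1) ∧
    r = condMI (fun t : 𝒳 × 𝒴 × Fin (Fintype.card 𝒳 + 1) => p (t.2.2, t.1, t.2.1))}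

/-- The set over which the single-letter CR formula
`max{I(X;X̂,Ŷ|Y), I(Y;X̂,Ŷ|X)}` is minimised. -/
def crFormulaSet (q : 𝒳 × 𝒴 → ℝ) (δ1 : 𝒳 → Xh → ℝ) (δ2 : 𝒴 → Yh → ℝ)
    (d1 d2 : ℝ) : Set ℝ :=
  {r : ℝ | ∃ W : 𝒳 × 𝒴 → Xh × Yh → ℝ, IsCondPmf W ∧
    (∑ x, ∑ y, ∑ z : Xh × Yh, q (x, y) * W (x, y) z * δ1 x z.1) ≤ d1 ∧
    (∑ x, ∑ y, ∑ z : Xh × Yh, q (x, y) * W (x, y) z * δ2 y z.2) ≤ d2 ∧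
    r = max
      (condMI (fun t : 𝒳 × 𝒴 × (Xh × Yh) => q (t.1, t.2.1) * W (t.1, t.2.1) t.2.2))
      (condMI (fun t : 𝒴 × 𝒳 × (Xh × Yh) => q (t.2.1, t.1) * W (t.2.1, t.1) t.2.2))}

/-- Joint law of source blocks and channel outputs for a JSC encoder. -/
def jscP (q : 𝒳 × 𝒴 → ℝ) (qUV : 𝒲 → 𝒰 × 𝒱 → ℝ) {n m : ℕ}
    (f : (Fin n → 𝒳) × (Fin n → 𝒴) → Fin m → 𝒲)
    (x : Fin n → 𝒳) (y : Fin n → 𝒴) (u : Fin m → 𝒰) (v : Fin m → 𝒱) : ℝ :=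
  (∏ i, q (x i, y i)) * ∏ j, qUV (f (x, y) j) (u j, v j)

/-- `(d1,d2)` is achievable by joint source-channel coding with source rate `κs`
and channel rate `κc` (bandwidth expansion `κc/κs`). -/
def JSCAchievable (q : 𝒳 × 𝒴 → ℝ) (qUV : 𝒲 → 𝒰 × 𝒱 → ℝ)
    (δ1 : 𝒳 → Xh → ℝ) (δ2 : 𝒴 → Yh → ℝ) (κs κc d1 d2 : ℝ) : Prop :=
  ∀ ε > (0 : ℝ), ∃ (t n m : ℕ) (f : (Fin n → 𝒳) × (Fin n → 𝒴) → Fin m → 𝒲)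
    (g1 : (Fin m → 𝒰) × (Fin n → 𝒴) → Fin n → Xh)
    (g2 : (Fin m → 𝒱) × (Fin n → 𝒳) → Fin n → Yh),
    0 < t ∧ (n : ℝ) = κs * t ∧ (m : ℝ) = κc * t ∧
    (∑ x : Fin n → 𝒳, ∑ y : Fin n → 𝒴, ∑ u : Fin m → 𝒰, ∑ v : Fin m → 𝒱,
      jscP q qUV f x y u v * ((n : ℝ)⁻¹ * ∑ i, δ1 (x i) (g1 (u, y) i))) ≤ d1 + ε ∧
    (∑ x : Fin n → 𝒳, ∑ y : Fin n → 𝒴, ∑ u : Fin m → 𝒰, ∑ v : Fin m → 𝒱,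
      jscP q qUV f x y u v * ((n : ℝ)⁻¹ * ∑ i, δ2 (y i) (g2 (v, x) i))) ≤ d2 + ε

/-- `(d1,d2)` is achievable by joint source-channel coding with common
reconstructions, source rate `κs` and channel rate `κc`. -/
def CRJSCAchievable (q : 𝒳 × 𝒴 → ℝ) (qUV : 𝒲 → 𝒰 × 𝒱 → ℝ)
    (δ1 : 𝒳 → Xh → ℝ) (δ2 : 𝒴 → Yh → ℝ) (κs κc d1 d2 : ℝ) : Prop :=
  ∀ ε > (0 : ℝ), ∃ (t n m : ℕ) (f : (Fin n → 𝒳) × (Fin n → 𝒴) → Fin m → 𝒲)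
    (g1 : (Fin m → 𝒰) × (Fin n → 𝒴) → Fin n → Xh)
    (g2 : (Fin m → 𝒱) × (Fin n → 𝒳) → Fin n → Yh)
    (φ1 : (Fin m → 𝒰) × (Fin n → 𝒴) → Fin n → Yh)
    (φ2 : (Fin m → 𝒱) × (Fin n → 𝒳) → Fin n → Xh),
    0 < t ∧ (n : ℝ) = κs * t ∧ (m : ℝ) = κc * t ∧
    (∑ x : Fin n → 𝒳, ∑ y : Fin n → 𝒴, ∑ u : Fin m → 𝒰, ∑ v : Fin m → 𝒱,
      jscP q qUV f x y u v * ((n : ℝ)⁻¹ * ∑ i, δ1 (x i) (g1 (u, y) i))) ≤ d1 + ε ∧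
    (∑ x : Fin n → 𝒳, ∑ y : Fin n → 𝒴, ∑ u : Fin m → 𝒰, ∑ v : Fin m → 𝒱,
      jscP q qUV f x y u v * ((n : ℝ)⁻¹ * ∑ i, δ2 (y i) (g2 (v, x) i))) ≤ d2 + ε ∧
    (∑ x : Fin n → 𝒳, ∑ y : Fin n → 𝒴, ∑ u : Fin m → 𝒰, ∑ v : Fin m → 𝒱,
      if φ2 (v, x) = g1 (u, y) then 0 else jscP q qUV f x y u v) ≤ ε ∧
    (∑ x : Fin n → 𝒳, ∑ y : Fin n → 𝒴, ∑ u : Fin m → 𝒰, ∑ v : Fin m → 𝒱,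
      if φ1 (u, y) = g2 (v, x) then 0 else jscP q qUV f x y u v) ≤ ε

/-- `I(W;U)` under the joint law `pW · qUV` (U-marginal of the broadcast channel). -/
def chMIU (qUV : 𝒲 → 𝒰 × 𝒱 → ℝ) (pW : 𝒲 → ℝ) : ℝ :=
  MI (fun t : 𝒲 × 𝒰 => pW t.1 * ∑ v, qUV t.1 (t.2, v))

/-- `I(W;V)` under the joint law `pW · qUV` (V-marginal of the broadcast channel). -/
def chMIV (qUV : 𝒲 → 𝒰 × 𝒱 → ℝ) (pW : 𝒲 → ℝ) : ℝ :=
  MI (fun t : 𝒲 × 𝒱 => pW t.1 * ∑ u, qUV t.1 (u, t.2))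

/-- The doubly symmetric binary source with crossover probability `ρ`. -/
def dsbs (ρ : ℝ) : Bool × Bool → ℝ :=
  fun t => if t.1 = t.2 then (1 - ρ) / 2 else ρ / 2

/-- The Hamming distortion measure. -/
def dHam {α : Type} : α → α → ℝ := fun a b => if a = b then 0 else 1

/-- The binary entropy function (base 2). -/
def binEnt (x : ℝ) : ℝ := -(x * Real.logb 2 x) - (1 - x) * Real.logb 2 (1 - x)

/-- A difference distortion measure built from a per-letter function of the
(modular) difference. -/
def diffD {l : ℕ} (δ : Fin l → ℝ) : Fin l → Fin l → ℝ := fun a b => δ (a - b)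

/-- Capacity of the modulo-additive channel with noise `pN` and input
distortion constraint `d`. -/
def Cadd {l : ℕ} (δ : Fin l → ℝ) (d : ℝ) (pN : Fin l → ℝ) : ℝ :=
  sSup {r : ℝ | ∃ pW : Fin l → ℝ, IsPmf pW ∧ (∑ w, pW w * δ w) ≤ d ∧
    r = MI (fun t : Fin l × Fin l => pW t.1 * pN (t.2 - t.1))}

/-- The minimax (worst-noise) capacity under distortion constraint `d`. -/
def Cworst {l : ℕ} (δ : Fin l → ℝ) (d : ℝ) : ℝ :=
  sInf {r : ℝ | ∃ pN : Fin l → ℝ, IsPmf pN ∧ (∑ x, pN x * δ x) ≤ d ∧ r = Cadd δ d pN}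

/-- Wyner's common information `K(X;Y)` (auxiliary alphabet of size 4). -/
def wynerK (q : 𝒳 × 𝒴 → ℝ) : ℝ :=
  sInf {r : ℝ | ∃ W : 𝒳 × 𝒴 → Fin 4 → ℝ, IsCondPmf W ∧
    Markov (fun t : 𝒳 × Fin 4 × 𝒴 => q (t.1, t.2.2) * W (t.1, t.2.2) t.2.1) ∧
    r = MI (fun t : (𝒳 × 𝒴) × Fin 4 => q t.1 * W t.1 t.2)}

/-- The one-description (Kimura–Uyematsu) upper bound `R_U*(d1,d2)`. -/
def oneDescUB (q : 𝒳 × 𝒴 → ℝ) (δ1 : 𝒳 → Xh → ℝ) (δ2 : 𝒴 → Yh → ℝ) (d1 d2 : ℝ) : ℝ :=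
  sInf {r : ℝ | ∃ W : 𝒳 × 𝒴 → Fin (Fintype.card 𝒳 * Fintype.card 𝒴 + 2) → ℝ,
    IsCondPmf W ∧
    (∃ π1 : Fin (Fintype.card 𝒳 * Fintype.card 𝒴 + 2) × 𝒴 → Xh,
      (∑ x, ∑ y, ∑ c, q (x, y) * W (x, y) c * δ1 x (π1 (c, y))) ≤ d1) ∧
    (∃ π2 : Fin (Fintype.card 𝒳 * Fintype.card 𝒴 + 2) × 𝒳 → Yh,
      (∑ x, ∑ y, ∑ c, q (x, y) * W (x, y) c * δ2 y (π2 (c, x))) ≤ d2) ∧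
    r = max
      (condMI (fun t : 𝒳 × 𝒴 × Fin (Fintype.card 𝒳 * Fintype.card 𝒴 + 2) =>
        q (t.1, t.2.1) * W (t.1, t.2.1) t.2.2))
      (condMI (fun t : 𝒴 × 𝒳 × Fin (Fintype.card 𝒳 * Fintype.card 𝒴 + 2) =>
        q (t.2.1, t.1) * W (t.2.1, t.1) t.2.2))}

end TWR

namespace TWR

lemma gibbs {ι : Type} [Fintype ι] (w a : ι → ℝ) (m : ℝ) (hm : 0 < m)
    (hw : ∀ i, 0 ≤ w i) (hw1 : ∑ i, w i = 1) (ha : ∀ i, 0 < w i → 0 < a i)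
    (hs : ∑ i, w i * a i ≤ m) :
    ∑ i, w i * Real.logb 2 (a i) ≤ Real.logb 2 m := by
  have hl2 : (0:ℝ) < Real.log 2 := Real.log_pos (by norm_num)
  have key : ∀ i, w i * Real.log (a i) ≤ w i * Real.log m + (w i * a i / m - w i) := by
    intro i
    rcases (hw i).eq_or_lt with h | h
    · simp [← h]
    · have hai := ha i h
      have h1 : Real.log (a i / m) ≤ a i / m - 1 := Real.log_le_sub_one_of_pos (by positivity)
      rw [Real.log_div hai.ne' hm.ne'] at h1
      have := mul_le_mul_of_nonneg_left h1 h.le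
      have e : w i * a i / m = w i * (a i / m) := by ring
      rw [e]; linarith
  have h2 : ∑ i, w i * Real.log (a i) ≤ Real.log m := by
    calc _ ≤ ∑ i, (w i * Real.log m + (w i * a i / m - w i)) :=
          Finset.sum_le_sum fun i _ => key i
      _ = Real.log m + ((∑ i, w i * a i) / m - 1) := by
          rw [Finset.sum_add_distrib, Finset.sum_sub_distrib, ← Finset.sum_mul, hw1,
            ← Finset.sum_div, one_mul]
      _ ≤ Real.log m := by
          have : (∑ i, w i * a i) / m ≤ 1 := by rw [div_le_one hm]; exact hs
          linarith
  simp only [Real.logb, ← mul_div_assoc, ← Finset.sum_div]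
  gcongr

lemma sum_prod_eq {n : ℕ} {α : Type} [Fintype α] (p : Fin n → α → ℝ) :
    ∑ a : Fin n → α, ∏ i, p i (a i) = ∏ i, ∑ x, p i x := by
  rw [Finset.prod_univ_sum]; simp

lemma sum_iid_marg {n : ℕ} {α : Type} [Fintype α] (p : α → ℝ) (hp : ∑ x, p x = 1)
    (h : α → ℝ) (j : Fin n) :
    ∑ a : Fin n → α, (∏ i, p (a i)) * h (a j) = ∑ x, p x * h x := by
  have : ∀ a : Fin n → α, (∏ i, p (a i)) * h (a j)
      = ∏ i, (p (a i) * if i = j then h (a i) else 1) := by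
    intro a
    rw [Finset.prod_mul_distrib]; simp
  simp only [this]
  rw [sum_prod_eq (fun i x => p x * if i = j then h x else 1)]
  rw [Finset.prod_eq_single j]
  · simp
  · intro i _ hi; simp [hi, hp]
  · simp

lemma condMI_eq {α β γ : Type} [Fintype α] [Fintype β] [Fintype γ] (p : α × β × γ → ℝ) :
    condMI p = ∑ a, ∑ b, ∑ c, p (a,b,c) * (Real.logb 2 (p (a,b,c))
      + Real.logb 2 (∑ a', ∑ c', p (a',b,c'))
      - Real.logb 2 (∑ c', p (a,b,c')) - Real.logb 2 (∑ a', p (a',b,c))) := by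
  simp only [condMI, H2, mul_sub, mul_add, Finset.sum_sub_distrib, Finset.sum_add_distrib,
    Fintype.sum_prod_type, ← Finset.sum_mul]
  have h1 : ∑ a, ∑ b, ∑ c, p (a,b,c) * Real.logb 2 (∑ a', ∑ c', p (a',b,c'))
     = ∑ b, (∑ a, ∑ c, p (a,b,c)) * Real.logb 2 (∑ a', ∑ c', p (a',b,c')) := by
    rw [Finset.sum_comm]; simp only [Finset.sum_mul]
  have h2 : ∑ a, ∑ b, ∑ c, p (a,b,c) * Real.logb 2 (∑ a', p (a',b,c))
     = ∑ b, ∑ c, (∑ a, p (a,b,c)) * Real.logb 2 (∑ a', p (a',b,c)) := by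
    rw [Finset.sum_comm]
    refine Finset.sum_congr rfl fun b _ => ?_
    rw [Finset.sum_comm]; simp only [Finset.sum_mul]
  simp only [← Finset.sum_mul] at h1 h2
  rw [h1, h2]; ring

lemma condMI_eq_log {α β γ : Type} [Fintype α] [Fintype β] [Fintype γ] (p : α × β × γ → ℝ)
    (hp : ∀ t, 0 ≤ p t) :
    condMI p = ∑ t : α × β × γ, p t * Real.logb 2
      (p t * (∑ a', ∑ c', p (a',t.2.1,c')) /
       ((∑ c', p (t.1,t.2.1,c')) * (∑ a', p (a',t.2.1,t.2.2)))) := by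
  rw [condMI_eq]
  simp only [Fintype.sum_prod_type]
  refine Finset.sum_congr rfl fun a _ => Finset.sum_congr rfl fun b _ =>
    Finset.sum_congr rfl fun c _ => ?_
  rcases (hp (a,b,c)).eq_or_lt with h | h
  · simp [← h]
  have h1 : 0 < ∑ c', p (a,b,c') := lt_of_lt_of_le h
    (Finset.single_le_sum (f := fun c' => p (a,b,c')) (fun _ _ => hp _) (Finset.mem_univ c))
  have h2 : 0 < ∑ a', p (a',b,c) := lt_of_lt_of_le h
    (Finset.single_le_sum (f := fun a' => p (a',b,c)) (fun _ _ => hp _) (Finset.mem_univ a))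
  have h3 : 0 < ∑ a', ∑ c', p (a',b,c') := lt_of_lt_of_le h1
    (Finset.single_le_sum (f := fun a' => ∑ c', p (a',b,c'))
      (fun _ _ => Finset.sum_nonneg fun _ _ => hp _) (Finset.mem_univ a))
  rw [Real.logb_div (by positivity) (by positivity), Real.logb_mul h.ne' h3.ne',
    Real.logb_mul h1.ne' h2.ne']
  ring

lemma condMI_nonneg {α β γ : Type} [Fintype α] [Fintype β] [Fintype γ] (p : α × β × γ → ℝ)
    (hp : IsPmf p) : 0 ≤ condMI p := by
  obtain ⟨hp, hp1⟩ := hp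
  rw [condMI_eq_log p hp]
  have key := gibbs p (fun t => ((∑ c', p (t.1,t.2.1,c')) * (∑ a', p (a',t.2.1,t.2.2))) /
    (p t * (∑ a', ∑ c', p (a',t.2.1,c')))) 1 one_pos hp hp1 ?_ ?_
  · rw [Real.logb_one] at key
    have e : ∀ t : α × β × γ, p t * Real.logb 2 (((∑ c', p (t.1,t.2.1,c')) *
      (∑ a', p (a',t.2.1,t.2.2))) / (p t * (∑ a', ∑ c', p (a',t.2.1,c'))))
      = - (p t * Real.logb 2 ((p t * (∑ a', ∑ c', p (a',t.2.1,c'))) /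
        ((∑ c', p (t.1,t.2.1,c')) * (∑ a', p (a',t.2.1,t.2.2))))) := by
      intro t
      rw [← inv_div, Real.logb_inv]; ring
    simp only [e, Finset.sum_neg_distrib] at key
    linarith
  · rintro ⟨a, b, c⟩ h
    have h1 : 0 < ∑ c', p (a,b,c') := lt_of_lt_of_le h
      (Finset.single_le_sum (f := fun c' => p (a,b,c')) (fun _ _ => hp _) (Finset.mem_univ c))
    have h2 : 0 < ∑ a', p (a',b,c) := lt_of_lt_of_le h
      (Finset.single_le_sum (f := fun a' => p (a',b,c)) (fun _ _ => hp _) (Finset.mem_univ a))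
    have h3 : 0 < ∑ a', ∑ c', p (a',b,c') := lt_of_lt_of_le h1
      (Finset.single_le_sum (f := fun a' => ∑ c', p (a',b,c'))
        (fun _ _ => Finset.sum_nonneg fun _ _ => hp _) (Finset.mem_univ a))
    positivity
  · have nn1 : ∀ a b, 0 ≤ ∑ c', p (a,b,c') := fun a b => Finset.sum_nonneg fun _ _ => hp _
    have nn2 : ∀ b c, 0 ≤ ∑ a', p (a',b,c) := fun a b => Finset.sum_nonneg fun _ _ => hp _
    have nn3 : ∀ b, 0 ≤ ∑ a', ∑ c', p (a',b,c') := fun b => Finset.sum_nonneg fun _ _ => nn1 _ _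
    calc _ ≤ ∑ t : α × β × γ, ((∑ c', p (t.1,t.2.1,c')) * (∑ a', p (a',t.2.1,t.2.2))) /
            (∑ a', ∑ c', p (a',t.2.1,c')) := by
          refine Finset.sum_le_sum fun t _ => ?_
          rcases (hp t).eq_or_lt with h | h
          · rw [← h, zero_mul]
            exact div_nonneg (mul_nonneg (nn1 _ _) (nn2 _ _)) (nn3 _)
          · rw [mul_div_assoc', mul_div_mul_left _ _ h.ne']
      _ = ∑ b, ((∑ a', ∑ c', p (a',b,c')) * (∑ a', ∑ c', p (a',b,c'))) /
            (∑ a', ∑ c', p (a',b,c')) := by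
          simp only [Fintype.sum_prod_type]
          rw [Finset.sum_comm]
          refine Finset.sum_congr rfl fun b _ => ?_
          simp only [← Finset.sum_div, ← Finset.mul_sum, ← Finset.sum_mul]
          congr 2
          exact Finset.sum_comm
      _ = ∑ b, (∑ a', ∑ c', p (a',b,c')) := by
          simp only [mul_self_div_self]
      _ ≤ 1 := by
          rw [← hp1, Finset.sum_comm]; simp only [Fintype.sum_prod_type]; rfl

/-- A joint law with given marginal comes from a conditional pmf. -/
lemma exists_cond {α γ : Type} [Fintype α] [Fintype γ] [Nonempty γ] (q : α → ℝ)
    (p : α → γ → ℝ) (hp : ∀ a c, 0 ≤ p a c) (hq : ∀ a, ∑ c, p a c = q a) :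
    ∃ W : α → γ → ℝ, IsCondPmf W ∧ ∀ a c, q a * W a c = p a c := by
  have hq0 : ∀ a, 0 ≤ q a := fun a => hq a ▸ Finset.sum_nonneg fun _ _ => hp _ _
  let z0 : γ := Classical.arbitrary γ
  refine ⟨fun a c => if q a = 0 then (if c = z0 then 1 else 0) else p a c / q a, ?_, ?_⟩
  · intro a
    by_cases h : q a = 0
    · simp only [h, if_true]
      exact ⟨fun c => by dsimp only; split_ifs <;> norm_num, by simp⟩
    · simp only [h, if_false]
      exact ⟨fun c => div_nonneg (hp _ _) (hq0 _), by rw [← Finset.sum_div, hq, div_self h]⟩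
  · intro a c
    by_cases h : q a = 0
    · have := (Finset.sum_eq_zero_iff_of_nonneg (fun c _ => hp a c)).1 ((hq a).trans h) c
        (Finset.mem_univ c)
      simp [h, this]
    · simp only [h, if_false]; field_simp

/-- reindexing pair of sequences -/
lemma sum_iid {𝒳 𝒴 : Type} [Fintype 𝒳] [Fintype 𝒴] {n : ℕ}
    (h : (Fin n → 𝒳 × 𝒴) → ℝ) :
    ∑ xy : (Fin n → 𝒳) × (Fin n → 𝒴), h (fun i => (xy.1 i, xy.2 i)) = ∑ a, h a := by
  refine Fintype.sum_equiv (Equiv.arrowProdEquivProdArrow (Fin n) (fun _ => 𝒳) (fun _ => 𝒴)).symm _ _ ?_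
  intro xy; rfl

lemma iid_nonneg {𝒳 𝒴 : Type} [Fintype 𝒳] [Fintype 𝒴] (q : 𝒳 × 𝒴 → ℝ) (hq : IsPmf q)
    (n : ℕ) (xy) : 0 ≤ iid q n xy := Finset.prod_nonneg fun _ _ => hq.1 _

lemma iid_sum {𝒳 𝒴 : Type} [Fintype 𝒳] [Fintype 𝒴] (q : 𝒳 × 𝒴 → ℝ) (hq : IsPmf q)
    (n : ℕ) : ∑ xy, iid q n xy = 1 := by
  unfold iid
  rw [sum_iid (fun a => ∏ i, q (a i)), sum_prod_eq (fun _ x => q x)]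
  simp [hq.2]

end TWR

namespace TWR

set_option maxHeartbeats 1000000 in
lemma converse_code {𝒳 𝒴 Xh : Type} [Fintype 𝒳] [Fintype 𝒴] [Fintype Xh] [Nonempty Xh]
    (q : 𝒳 × 𝒴 → ℝ) (hq : IsPmf q) (δ1 : 𝒳 → Xh → ℝ) {n m : ℕ} (hn : 0 < n)
    (f : (Fin n → 𝒳) × (Fin n → 𝒴) → Fin m)
    (g1 : Fin m × (Fin n → 𝒴) → Fin n → Xh) :
    ∃ W : 𝒳 × 𝒴 → Xh → ℝ, IsCondPmf W ∧
    (∑ x, ∑ y, ∑ xh, q (x, y) * W (x, y) xh * δ1 x xh) = Delta1 q δ1 f g1 ∧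
    condMI (fun t : 𝒳 × 𝒴 × Xh => q (t.1, t.2.1) * W (t.1, t.2.1) t.2.2)
      ≤ Real.logb 2 m / n := by
  have hn' : (0:ℝ) < n := by exact_mod_cast hn
  set P := iid q n with hP
  have hP0 : ∀ xy, 0 ≤ P xy := iid_nonneg q hq n
  have hP1 : ∑ xy, P xy = 1 := iid_sum q hq n
  let tr : (Fin n → 𝒳) × (Fin n → 𝒴) → Fin n → 𝒳 × 𝒴 × Xh :=
    fun xy i => (xy.1 i, xy.2 i, g1 (f xy, xy.2) i)
  let pb : 𝒳 × 𝒴 × Xh → ℝ := fun t =>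
    ∑ xy, P xy * ((n:ℝ)⁻¹ * ∑ i, if tr xy i = t then 1 else 0)
  have hpb : ∀ h : 𝒳 × 𝒴 × Xh → ℝ, ∑ t, pb t * h t
      = ∑ xy, P xy * ((n:ℝ)⁻¹ * ∑ i, h (tr xy i)) := by
    intro h
    simp only [pb, Finset.sum_mul]
    rw [Finset.sum_comm]
    refine Finset.sum_congr rfl fun xy _ => ?_
    simp only [mul_assoc, ← Finset.mul_sum, Finset.sum_mul]
    congr 2
    rw [Finset.sum_comm]
    refine Finset.sum_congr rfl fun i _ => ?_
    simp
  have hpb0 : ∀ t, 0 ≤ pb t := by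
    intro t
    refine Finset.sum_nonneg fun xy _ => mul_nonneg (hP0 _) (mul_nonneg (by positivity) ?_)
    exact Finset.sum_nonneg fun i _ => by split_ifs <;> norm_num
  have hmarg : ∀ x y, ∑ z, pb (x,y,z) = q (x,y) := by
    intro x y
    have h1 := hpb (fun t => if (t.1, t.2.1) = (x,y) then 1 else 0)
    have h2 : ∑ t : 𝒳 × 𝒴 × Xh, pb t * (if (t.1, t.2.1) = (x,y) then 1 else 0)
        = ∑ z, pb (x,y,z) := by
      simp only [Fintype.sum_prod_type]
      rw [Finset.sum_eq_single x, Finset.sum_eq_single y]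
      · simp
      · intro b _ hb; simp [hb]
      · simp
      · intro b _ hb; simp [hb]
      · simp
    rw [← h2, h1]
    have h3 : ∀ i : Fin n, ∑ xy, P xy *
        (if ((tr xy i).1, (tr xy i).2.1) = (x,y) then (1:ℝ) else 0) = q (x,y) := by
      intro i
      have := sum_iid (n := n) (fun a : Fin n → 𝒳 × 𝒴 => (∏ j, q (a j)) *
        (if a i = (x,y) then (1:ℝ) else 0))
      have h4 := sum_iid_marg (n := n) q hq.2 (fun t => if t = (x,y) then (1:ℝ) else 0) i
      simp only [hP, iid, tr]
      rw [this, h4]; simp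
    calc _ = (n:ℝ)⁻¹ * ∑ i : Fin n, ∑ xy, P xy *
        (if ((tr xy i).1, (tr xy i).2.1) = (x,y) then (1:ℝ) else 0) := by
          rw [Finset.sum_comm, Finset.mul_sum]
          refine Finset.sum_congr rfl fun xy _ => ?_
          rw [← Finset.mul_sum]; ring
      _ = q (x,y) := by
          simp only [h3, Finset.sum_const, Finset.card_univ, Fintype.card_fin, nsmul_eq_mul]
          field_simp
  obtain ⟨W, hW, hWp⟩ := exists_cond q (fun a c => pb (a.1,a.2,c)) (fun _ _ => hpb0 _)
    (fun a => hmarg a.1 a.2)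
  refine ⟨W, hW, ?_, ?_⟩
  · simp only [hWp]
    have := hpb (fun t => δ1 t.1 t.2.2)
    simp only [Fintype.sum_prod_type] at this
    rw [this]
    simp only [Delta1, Fintype.sum_prod_type]; rfl
  have e : (fun t : 𝒳 × 𝒴 × Xh => q (t.1, t.2.1) * W (t.1, t.2.1) t.2.2) = pb := by
    funext t; exact hWp _ _
  rw [e, condMI_eq_log pb hpb0]
  set J : 𝒳 × 𝒴 × Xh → ℝ := fun t => pb t * (∑ a', ∑ c', pb (a',t.2.1,c')) /
       ((∑ c', pb (t.1,t.2.1,c')) * (∑ a', pb (a',t.2.1,t.2.2))) with hJ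
  rw [hpb (fun t => Real.logb 2 (J t))]
  have hne : ∃ xy : (Fin n → 𝒳) × (Fin n → 𝒴), True := by
    by_contra hc
    push Not at hc
    have : IsEmpty ((Fin n → 𝒳) × (Fin n → 𝒴)) := ⟨fun a => (hc a).elim⟩
    simp at hP1
  obtain ⟨xy0, -⟩ := hne
  have hm : 0 < m := (f xy0).pos
  have hm' : (0:ℝ) < m := by exact_mod_cast hm
  have hpos : ∀ xy, 0 < P xy → ∀ i, 0 < pb (tr xy i) := by
    intro xy h i
    refine lt_of_lt_of_le ?_ (Finset.single_le_sum (f := fun xy' => P xy' * ((n:ℝ)⁻¹ * ∑ j, if tr xy' j = tr xy i then (1:ℝ) else 0)) (fun xy' _ => mul_nonneg (hP0 _) (mul_nonneg (by positivity)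
      (Finset.sum_nonneg fun i _ => by split_ifs <;> norm_num))) (Finset.mem_univ xy))
    refine mul_pos h (mul_pos (by positivity) ?_)
    refine lt_of_lt_of_le one_pos ?_
    have := Finset.single_le_sum (f := fun j => if tr xy j = tr xy i then (1:ℝ) else 0)
      (fun j _ => by split_ifs <;> norm_num) (Finset.mem_univ i)
    simpa using this
  have hJpos : ∀ t, 0 < pb t → 0 < J t := by
    rintro ⟨a, b, c⟩ h
    have h1 : 0 < ∑ c', pb (a,b,c') := lt_of_lt_of_le h
      (Finset.single_le_sum (f := fun c' => pb (a,b,c')) (fun _ _ => hpb0 _) (Finset.mem_univ c))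
    have h2 : 0 < ∑ a', pb (a',b,c) := lt_of_lt_of_le h
      (Finset.single_le_sum (f := fun a' => pb (a',b,c)) (fun _ _ => hpb0 _) (Finset.mem_univ a))
    have h3 : 0 < ∑ a', ∑ c', pb (a',b,c') := lt_of_lt_of_le h1
      (Finset.single_le_sum (f := fun a' => ∑ c', pb (a',b,c'))
        (fun _ _ => Finset.sum_nonneg fun _ _ => hpb0 _) (Finset.mem_univ a))
    exact div_pos (mul_pos h h3) (mul_pos h1 h2)
  have hprod : ∀ xy, P xy * ∑ i, Real.logb 2 (J (tr xy i))
      = P xy * Real.logb 2 (∏ i, J (tr xy i)) := by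
    intro xy
    rcases (hP0 xy).eq_or_lt with h | h
    · simp [← h]
    · rw [Real.logb_prod]
      intro i _; exact (hJpos _ (hpos xy h i)).ne'
  have e2 : ∑ xy, P xy * ((n:ℝ)⁻¹ * ∑ i, Real.logb 2 (J (tr xy i)))
      = (∑ xy, P xy * Real.logb 2 (∏ i, J (tr xy i))) / n := by
    rw [Finset.sum_div]
    refine Finset.sum_congr rfl fun xy _ => ?_
    rw [← hprod]; field_simp
  rw [e2]
  gcongr
  refine gibbs P _ m hm' hP0 hP1
    (fun xy h => Finset.prod_pos fun i _ => hJpos _ (hpos xy h i)) ?_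
  set s : 𝒴 → ℝ := fun y => ∑ x, q (x,y) with hs
  have hs0 : ∀ y, 0 ≤ s y := fun y => Finset.sum_nonneg fun _ _ => hq.1 _
  set r : 𝒴 → Xh → ℝ := fun y z => ∑ x, pb (x,y,z) with hr
  have hr0 : ∀ y z, 0 ≤ r y z := fun y z => Finset.sum_nonneg fun _ _ => hpb0 _
  have hK0 : ∀ x y z, 0 ≤ s y * (pb (x,y,z) / r y z) := fun x y z =>
    mul_nonneg (hs0 _) (div_nonneg (hpb0 _) (hr0 _ _))
  calc ∑ xy, P xy * ∏ i, J (tr xy i)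
      ≤ ∑ xy : (Fin n → 𝒳) × (Fin n → 𝒴), ∏ i,
        (s (xy.2 i) * (pb (tr xy i) / r (xy.2 i) (g1 (f xy, xy.2) i))) := by
        refine Finset.sum_le_sum fun xy _ => ?_
        rw [hP, iid, ← Finset.prod_mul_distrib]
        refine Finset.prod_le_prod (fun i _ => ?_) (fun i _ => ?_)
        · refine mul_nonneg (hq.1 _) (div_nonneg (mul_nonneg (hpb0 _) ?_) (mul_nonneg ?_ (hr0 _ _)))
          · exact Finset.sum_nonneg fun _ _ => Finset.sum_nonneg fun _ _ => hpb0 _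
          · exact Finset.sum_nonneg fun _ _ => hpb0 _
        · rcases (hq.1 (xy.1 i, xy.2 i)).eq_or_lt with h | h
          · rw [← h, zero_mul]; exact hK0 _ _ _
          · simp only [hJ, hmarg, tr]
            rw [mul_div_assoc', mul_div_mul_left _ _ h.ne', mul_comm (pb _), mul_div_assoc]
    _ ≤ ∑ xy : (Fin n → 𝒳) × (Fin n → 𝒴), ∑ k : Fin m, ∏ i,
        (s (xy.2 i) * (pb (xy.1 i, xy.2 i, g1 (k, xy.2) i) / r (xy.2 i) (g1 (k, xy.2) i))) := by
        refine Finset.sum_le_sum fun xy _ => ?_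
        exact Finset.single_le_sum (f := fun k => ∏ i, (s (xy.2 i) *
          (pb (xy.1 i, xy.2 i, g1 (k, xy.2) i) / r (xy.2 i) (g1 (k, xy.2) i))))
          (fun k _ => Finset.prod_nonneg fun i _ => hK0 _ _ _) (Finset.mem_univ (f xy))
    _ = ∑ k : Fin m, ∑ y : Fin n → 𝒴, ∏ i, ∑ x,
        (s (y i) * (pb (x, y i, g1 (k, y) i) / r (y i) (g1 (k, y) i))) := by
        rw [Finset.sum_comm]
        refine Finset.sum_congr rfl fun k _ => ?_
        rw [Fintype.sum_prod_type, Finset.sum_comm]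
        refine Finset.sum_congr rfl fun y _ => ?_
        exact sum_prod_eq (fun i x => (s (y i) * (pb (x, y i, g1 (k, y) i) / r (y i) (g1 (k, y) i))))
    _ ≤ ∑ k : Fin m, ∑ y : Fin n → 𝒴, ∏ i, s (y i) := by
        refine Finset.sum_le_sum fun k _ => Finset.sum_le_sum fun y _ =>
          Finset.prod_le_prod (fun i _ => Finset.sum_nonneg fun _ _ => hK0 _ _ _) fun i _ => ?_
        rw [← Finset.mul_sum, ← Finset.sum_div]
        exact mul_le_of_le_one_right (hs0 _) (div_self_le_one _)
    _ = m := by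
        rw [sum_prod_eq (fun _ y => s y)]
        have : ∑ y, s y = 1 := by
          simp only [hs]; rw [Finset.sum_comm, ← hq.2, Fintype.sum_prod_type]
        simp [this]

lemma H2_continuous {α : Type} [Fintype α] : Continuous (H2 : (α → ℝ) → ℝ) := by
  unfold H2
  refine Continuous.neg (continuous_finsetSum _ fun a _ => ?_)
  have : Continuous fun x : ℝ => x * Real.logb 2 x := by
    simp only [Real.logb, ← mul_div_assoc]
    exact Real.continuous_mul_log.div_const _
  exact this.comp (continuous_apply a)

lemma condMI_continuous {α β γ : Type} [Fintype α] [Fintype β] [Fintype γ] :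
    Continuous (condMI : (α × β × γ → ℝ) → ℝ) := by
  unfold condMI
  refine ((Continuous.add ?_ ?_).sub ?_).sub ?_ <;>
  · refine H2_continuous.comp ?_
    fun_prop

lemma converse {𝒳 𝒴 Xh Yh : Type} [Fintype 𝒳] [Fintype 𝒴] [Fintype Xh] [Fintype Yh] [Nonempty Xh]
    (q : 𝒳 × 𝒴 → ℝ) (hq : IsPmf q) (δ1 : 𝒳 → Xh → ℝ) (δ2 : 𝒴 → Yh → ℝ) (d1 d2 r : ℝ)
    (h : RDAchievable q δ1 δ2 d1 d2 r) :
    ∃ W : 𝒳 × 𝒴 → Xh → ℝ, IsCondPmf W ∧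
    (∑ x, ∑ y, ∑ xh, q (x, y) * W (x, y) xh * δ1 x xh) ≤ d1 ∧
    condMI (fun t : 𝒳 × 𝒴 × Xh => q (t.1, t.2.1) * W (t.1, t.2.1) t.2.2) ≤ r := by
  have step : ∀ k : ℕ, ∃ W : 𝒳 × 𝒴 → Xh → ℝ, IsCondPmf W ∧
    (∑ x, ∑ y, ∑ xh, q (x, y) * W (x, y) xh * δ1 x xh) ≤ d1 + 1 / ((k:ℝ) + 1) ∧
    condMI (fun t : 𝒳 × 𝒴 × Xh => q (t.1, t.2.1) * W (t.1, t.2.1) t.2.2)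
      ≤ r + 1 / ((k:ℝ) + 1) := by
    intro k
    obtain ⟨n, m, f, g1, g2, hn, h1, h2, -⟩ := h (1 / ((k:ℝ) + 1)) (by positivity)
    obtain ⟨W, hW, e, hI⟩ := converse_code q hq δ1 hn f g1
    exact ⟨W, hW, e ▸ h2, hI.trans h1⟩
  choose Ws hWs hd hI using step
  have hK : IsCompact {W : 𝒳 × 𝒴 → Xh → ℝ | ∀ a, W a ∈ stdSimplex ℝ Xh} := by
    have := isCompact_univ_pi (X := fun _ : 𝒳 × 𝒴 => Xh → ℝ)
      (s := fun _ => stdSimplex ℝ Xh) (fun _ => isCompact_stdSimplex ℝ Xh)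
    simpa [Set.pi] using this
  obtain ⟨W, hW, φ, hφ, hlim⟩ := hK.tendsto_subseq (x := Ws) (fun k a => hWs k a)
  have hz : Filter.Tendsto (fun k => 1 / (((φ k : ℕ):ℝ) + 1)) Filter.atTop (nhds 0) :=
    tendsto_one_div_add_atTop_nhds_zero_nat.comp hφ.tendsto_atTop
  refine ⟨W, fun a => hW a, ?_, ?_⟩
  · have hc : Continuous fun W : 𝒳 × 𝒴 → Xh → ℝ =>
      (∑ x, ∑ y, ∑ xh, q (x, y) * W (x, y) xh * δ1 x xh) := by fun_prop
    have t1 := (hc.tendsto W).comp hlim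
    have t2 := hz.const_add d1
    rw [add_zero] at t2
    exact le_of_tendsto_of_tendsto' t1 t2 fun k => hd (φ k)
  · have hc : Continuous fun W : 𝒳 × 𝒴 → Xh → ℝ =>
      condMI (fun t : 𝒳 × 𝒴 × Xh => q (t.1, t.2.1) * W (t.1, t.2.1) t.2.2) :=
      condMI_continuous.comp (by fun_prop)
    have t1 := (hc.tendsto W).comp hlim
    have t2 := hz.const_add r
    rw [add_zero] at t2
    exact le_of_tendsto_of_tendsto' t1 t2 fun k => hI (φ k)

end TWR

namespace TWR

lemma chernoff {α : Type} [Fintype α] (p : α → ℝ) (hp : IsPmf p) (f : α → ℝ) (μ γ : ℝ)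
    (hμ : ∑ a, p a * f a ≤ μ) (hγ : 0 < γ) :
    ∃ ρ : ℝ, 0 ≤ ρ ∧ ρ < 1 ∧ ∀ n : ℕ, ∑ a : Fin n → α,
      (∏ i, p (a i)) * (if n * (μ + γ) < ∑ i, f (a i) then 1 else 0) ≤ ρ ^ n := by
  set g : α → ℝ := fun a => f a - (μ + γ) with hg
  have hgm : ∑ a, p a * g a ≤ -γ := by
    simp only [hg, mul_sub, Finset.sum_sub_distrib, ← Finset.sum_mul, hp.2]; linarith
  set B : ℝ := 1 + ∑ a, |g a| with hB
  have hB1 : 1 ≤ B := by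
    have : 0 ≤ ∑ a, |g a| := Finset.sum_nonneg fun _ _ => abs_nonneg _
    linarith
  have hBg : ∀ a, |g a| ≤ B := fun a => by
    have := Finset.single_le_sum (f := fun a => |g a|) (fun _ _ => abs_nonneg _)
      (Finset.mem_univ a)
    linarith
  set l : ℝ := min (1 / B) (γ / (2 * B ^ 2)) with hl
  have hl0 : 0 < l := lt_min (by positivity) (by positivity)
  have hlB : l * B ≤ 1 := by
    have : l ≤ 1 / B := min_le_left _ _
    calc l * B ≤ 1 / B * B := by gcongr
      _ = 1 := by field_simp
  have hlB2 : l * B ^ 2 ≤ γ / 2 := by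
    have : l ≤ γ / (2 * B ^ 2) := min_le_right _ _
    calc l * B ^ 2 ≤ γ / (2 * B ^ 2) * B ^ 2 := by gcongr
      _ = γ / 2 := by field_simp
  refine ⟨∑ a, p a * Real.exp (l * g a), Finset.sum_nonneg fun a _ =>
    mul_nonneg (hp.1 a) (Real.exp_pos _).le, ?_, ?_⟩
  · have h1 : ∀ a, p a * Real.exp (l * g a) ≤ p a * (1 + l * g a + l * (γ / 2)) := by
      intro a
      refine mul_le_mul_of_nonneg_left ?_ (hp.1 a)
      have hle : |l * g a| ≤ 1 := by
        rw [abs_mul, abs_of_pos hl0]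
        exact (mul_le_mul_of_nonneg_left (hBg a) hl0.le).trans hlB
      have h2 := (abs_le.1 (Real.abs_exp_sub_one_sub_id_le hle)).2
      have h3 : (l * g a) ^ 2 ≤ l * (γ / 2) := by
        have h4 : g a ^ 2 ≤ B ^ 2 := by
          rw [← sq_abs]; exact pow_le_pow_left₀ (abs_nonneg _) (hBg a) 2
        calc (l * g a) ^ 2 = l * (l * g a ^ 2) := by ring
          _ ≤ l * (l * B ^ 2) := by gcongr
          _ ≤ _ := by gcongr
      linarith
    calc _ ≤ ∑ a, p a * (1 + l * g a + l * (γ / 2)) := Finset.sum_le_sum fun a _ => h1 a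
      _ = 1 + l * (∑ a, p a * g a) + l * (γ / 2) := by
        simp only [mul_add, Finset.sum_add_distrib, ← Finset.sum_mul, hp.2, Finset.mul_sum]
        congr 1
        · congr 1
          · simp
          · exact Finset.sum_congr rfl fun a _ => by ring
        · ring
      _ < 1 := by nlinarith
  · intro n
    have : (∑ a, p a * Real.exp (l * g a)) ^ n
        = ∑ a : Fin n → α, ∏ i, (p (a i) * Real.exp (l * g (a i))) := by
      rw [sum_prod_eq (fun _ x => p x * Real.exp (l * g x))]; simp
    rw [this]
    refine Finset.sum_le_sum fun a _ => ?_
    rw [Finset.prod_mul_distrib]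
    refine mul_le_mul_of_nonneg_left ?_ (Finset.prod_nonneg fun _ _ => hp.1 _)
    rw [← Real.exp_sum, ← Finset.mul_sum]
    split_ifs with h
    · refine Real.one_le_exp (mul_nonneg hl0.le ?_)
      simp only [hg, Finset.sum_sub_distrib, Finset.sum_const, Finset.card_univ, Fintype.card_fin,
        nsmul_eq_mul]
      linarith
    · exact (Real.exp_pos _).le

lemma covering {Z S : Type} [Fintype Z] [Fintype S] (Q : Z → ℝ) (hQ : IsPmf Q)
    (P : S → ℝ) (G : S → Z → Prop) (m : ℕ) :
    ∃ c : Fin m → Z, ∑ x, P x * (if ∃ k, G x (c k) then 0 else 1)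
      ≤ ∑ x, P x * (∑ z, if G x z then 0 else Q z) ^ m := by
  by_contra hc
  push Not at hc
  set C := ∑ x, P x * (∑ z, if G x z then 0 else Q z) ^ m with hC
  have w1 : ∑ c : Fin m → Z, ∏ k, Q (c k) = 1 := by
    rw [sum_prod_eq (fun _ z => Q z)]; simp [hQ.2]
  have e : ∑ c : Fin m → Z, (∏ k, Q (c k)) * ∑ x, P x * (if ∃ k, G x (c k) then 0 else 1) = C := by
    simp only [Finset.mul_sum]
    rw [Finset.sum_comm, hC]
    refine Finset.sum_congr rfl fun x _ => ?_
    have : (∑ z, if G x z then 0 else Q z) ^ m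
        = ∑ c : Fin m → Z, ∏ k, (if G x (c k) then 0 else Q (c k)) := by
      rw [sum_prod_eq (fun _ z => if G x z then 0 else Q z)]; simp
    rw [this, Finset.mul_sum]
    refine Finset.sum_congr rfl fun c _ => ?_
    split_ifs with h
    · obtain ⟨k, hk⟩ := h
      rw [Finset.prod_eq_zero (Finset.mem_univ k) (f := fun k => if G x (c k) then 0 else Q (c k))]
      · simp
      · simp [hk]
    · push Not at h
      simp only [h, if_false]; ring
  have w0 : ∀ c : Fin m → Z, 0 ≤ ∏ k, Q (c k) := fun c => Finset.prod_nonneg fun _ _ => hQ.1 _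
  have hpos : ∃ c : Fin m → Z, 0 < ∏ k, Q (c k) := by
    by_contra hn
    push Not at hn
    have := Finset.sum_nonpos (fun c (_ : c ∈ Finset.univ) => hn c)
    linarith
  obtain ⟨c0, hc0⟩ := hpos
  have : ∑ c : Fin m → Z, (∏ k, Q (c k)) * C
      < ∑ c : Fin m → Z, (∏ k, Q (c k)) * ∑ x, P x * (if ∃ k, G x (c k) then 0 else 1) :=
    Finset.sum_lt_sum (fun c _ => mul_le_mul_of_nonneg_left (hc c).le (w0 c))
      ⟨c0, Finset.mem_univ _, mul_lt_mul_of_pos_left (hc c0) hc0⟩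
  rw [e, ← Finset.sum_mul, w1, one_mul] at this
  exact lt_irrefl _ this

lemma cover_bound {Z : Type} [Fintype Z] (Q V : Z → ℝ) (hQ : IsPmf Q) (hV : IsPmf V)
    (G : Z → Prop) (b : ℝ) (h : ∀ z, G z → b * V z ≤ Q z) (m : ℕ) :
    (∑ z, if G z then 0 else Q z) ^ m ≤ (∑ z, if G z then 0 else V z) + Real.exp (-(m * b)) := by
  set a := ∑ z, if G z then V z else 0 with ha
  have split : ∀ R : Z → ℝ, (∑ z, if G z then 0 else R z) + (∑ z, if G z then R z else 0)
      = ∑ z, R z := by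
    intro R
    rw [← Finset.sum_add_distrib]
    exact Finset.sum_congr rfl fun z _ => by split_ifs <;> simp
  have hV1 := split V
  have hQ1 := split Q
  rw [hV.2] at hV1
  rw [hQ.2] at hQ1
  have hle : b * a ≤ ∑ z, if G z then Q z else 0 := by
    rw [ha, Finset.mul_sum]
    refine Finset.sum_le_sum fun z _ => ?_
    split_ifs with hz
    · exact h z hz
    · simp
  have ha0 : 0 ≤ a := Finset.sum_nonneg fun z _ => by split_ifs; exacts [hV.1 z, le_rfl]
  have hc0 : 0 ≤ ∑ z, if G z then 0 else V z :=
    Finset.sum_nonneg fun z _ => by split_ifs; exacts [le_rfl, hV.1 z]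
  have hq0 : 0 ≤ ∑ z, if G z then 0 else Q z :=
    Finset.sum_nonneg fun z _ => by split_ifs; exacts [le_rfl, hQ.1 z]
  have ha1 : a ≤ 1 := by linarith
  have h1 : (∑ z, if G z then 0 else Q z) ≤ Real.exp (-(b * a)) := by
    have := Real.add_one_le_exp (-(b * a))
    linarith
  have h2 := pow_le_pow_left₀ hq0 h1 m
  rw [← Real.exp_nat_mul] at h2
  have hconv := convexOn_exp.2 (Set.mem_univ (0:ℝ)) (Set.mem_univ (-(m * b)))
    (sub_nonneg.2 ha1) ha0 (by ring)
  simp only [smul_eq_mul, mul_zero, zero_add, Real.exp_zero, mul_one] at hconv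
  have e : (m:ℝ) * -(b * a) = a * -(m * b) := by ring
  rw [e] at h2
  have h3 : a * Real.exp (-(m * b)) ≤ Real.exp (-(m * b)) :=
    mul_le_of_le_one_left (Real.exp_pos _).le ha1
  linarith

end TWR

namespace TWR

/-- reindexing triple of sequences -/
lemma sum_triple {𝒳 𝒴 Z : Type} [Fintype 𝒳] [Fintype 𝒴] [Fintype Z] {n : ℕ}
    (h : (Fin n → 𝒳 × 𝒴 × Z) → ℝ) :
    ∑ xy : (Fin n → 𝒳) × (Fin n → 𝒴), ∑ z : Fin n → Z, h (fun i => (xy.1 i, xy.2 i, z i))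
      = ∑ a, h a := by
  rw [← sum_iid h, Fintype.sum_prod_type, Fintype.sum_prod_type]
  refine Finset.sum_congr rfl fun x _ => ?_
  have := sum_iid (fun a : Fin n → 𝒴 × Z => h (fun i => (x i, a i)))
  simp only at this ⊢
  rw [← this, Fintype.sum_prod_type]

set_option maxHeartbeats 1000000 in
lemma exists_code {𝒳 𝒴 Xh : Type} [Fintype 𝒳] [Fintype 𝒴] [Fintype Xh] [Nonempty Xh]
    (q : 𝒳 × 𝒴 → ℝ) (hq : IsPmf q) (δ1 : 𝒳 → Xh → ℝ) (dm : ℝ)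
    (hδ : ∀ x xh, 0 ≤ δ1 x xh ∧ δ1 x xh ≤ dm)
    (W : 𝒳 × 𝒴 → Xh → ℝ) (hW : IsCondPmf W) (d : ℝ)
    (hd : (∑ x, ∑ y, ∑ xh, q (x, y) * W (x, y) xh * δ1 x xh) ≤ d) (γ : ℝ) (hγ : 0 < γ) :
    ∃ ρ₁ ρ₂ : ℝ, 0 ≤ ρ₁ ∧ ρ₁ < 1 ∧ 0 ≤ ρ₂ ∧ ρ₂ < 1 ∧ ∀ n m : ℕ, 0 < n → 0 < m →
      ∃ (f : (Fin n → 𝒳) × (Fin n → 𝒴) → Fin m) (g1 : Fin m × (Fin n → 𝒴) → Fin n → Xh),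
      Delta1 q δ1 f g1 ≤ d + γ + dm * (ρ₁ ^ n + ρ₂ ^ n + Real.exp (-(m * ((2:ℝ) ^ (n *
        (condMI (fun t : 𝒳 × 𝒴 × Xh => q (t.1, t.2.1) * W (t.1, t.2.1) t.2.2) + γ)))⁻¹))) := by
  set p : 𝒳 × 𝒴 × Xh → ℝ := fun t => q (t.1, t.2.1) * W (t.1, t.2.1) t.2.2 with hp
  have hp0 : ∀ t, 0 ≤ p t := fun t => mul_nonneg (hq.1 _) ((hW _).1 _)
  have hpm : ∀ x y, ∑ z, p (x,y,z) = q (x,y) := fun x y => by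
    simp only [hp, ← Finset.mul_sum, (hW _).2, mul_one]
  have hp1 : ∑ t, p t = 1 := by
    rw [← hq.2]
    simp only [Fintype.sum_prod_type, hpm]
  have hpp : IsPmf p := ⟨hp0, hp1⟩
  set I := condMI p with hI
  obtain ⟨Q, hQ, hQr⟩ := exists_cond (fun y => ∑ x, q (x,y)) (fun y z => ∑ x, p (x,y,z))
    (fun y z => Finset.sum_nonneg fun _ _ => hp0 _) (fun y => by
      rw [Finset.sum_comm]; simp only [hpm])
  have hposd : ∀ t, 0 < p t → 0 < q (t.1, t.2.1) ∧ 0 < W (t.1,t.2.1) t.2.2 ∧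
      0 < ∑ x, q (x, t.2.1) ∧ 0 < Q t.2.1 t.2.2 := by
    rintro ⟨x, y, z⟩ h
    have h1 : 0 < q (x,y) := (hq.1 _).lt_of_ne' (left_ne_zero_of_mul h.ne')
    have h2 : 0 < W (x,y) z := ((hW _).1 _).lt_of_ne' (right_ne_zero_of_mul h.ne')
    have h3 : 0 < ∑ x, q (x, y) := lt_of_lt_of_le h1
      (Finset.single_le_sum (f := fun x => q (x,y)) (fun _ _ => hq.1 _) (Finset.mem_univ x))
    have h4 : 0 < ∑ x, p (x,y,z) := lt_of_lt_of_le h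
      (Finset.single_le_sum (f := fun x => p (x,y,z)) (fun _ _ => hp0 _) (Finset.mem_univ x))
    refine ⟨h1, h2, h3, ?_⟩
    have := hQr y z
    rw [← this] at h4
    exact ((hQ y).1 z).lt_of_ne' (right_ne_zero_of_mul h4.ne')
  let den : 𝒳 × 𝒴 × Xh → ℝ := fun t => Real.logb 2 (W (t.1,t.2.1) t.2.2 / Q t.2.1 t.2.2)
  have hden : ∑ t, p t * den t ≤ I := by
    rw [hI, condMI_eq_log p hp0]
    refine le_of_eq (Finset.sum_congr rfl fun t _ => ?_)
    rcases (hp0 t).eq_or_lt with h | h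
    · simp [← h]
    obtain ⟨h1, h2, h3, h4⟩ := hposd t h
    have e := hQr t.2.1 t.2.2
    simp only [den]
    rw [← e]
    simp only [hpm]
    congr 2
    simp only [hp]
    field_simp
  have hdist : ∑ t : 𝒳 × 𝒴 × Xh, p t * δ1 t.1 t.2.2 ≤ d := by
    simpa only [Fintype.sum_prod_type] using hd
  obtain ⟨ρ₁, h10, h11, hc1⟩ := chernoff p hpp den I γ hden hγ
  obtain ⟨ρ₂, h20, h21, hc2⟩ := chernoff p hpp (fun t => δ1 t.1 t.2.2) d γ hdist hγ
  refine ⟨ρ₁, ρ₂, h10, h11, h20, h21, fun n m hn hm => ?_⟩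
  have hn' : (0:ℝ) < n := by exact_mod_cast hn
  set T : ℝ := (2:ℝ) ^ (n * (I + γ)) with hT
  have hT0 : 0 < T := Real.rpow_pos_of_pos two_pos _
  let V : (Fin n → 𝒳) × (Fin n → 𝒴) → (Fin n → Xh) → ℝ :=
    fun xy z => ∏ i, W (xy.1 i, xy.2 i) (z i)
  let Qn : (Fin n → 𝒴) → (Fin n → Xh) → ℝ := fun y z => ∏ i, Q (y i) (z i)
  have hV : ∀ xy, IsPmf (V xy) := fun xy =>
    ⟨fun z => Finset.prod_nonneg fun i _ => (hW _).1 _, by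
      simp only [V]
      rw [sum_prod_eq (fun i z => W (xy.1 i, xy.2 i) z)]
      simp [(hW _).2]⟩
  have hQn : ∀ y, IsPmf (Qn y) := fun y =>
    ⟨fun z => Finset.prod_nonneg fun i _ => (hQ _).1 _, by
      simp only [Qn]
      rw [sum_prod_eq (fun i z => Q (y i) z)]
      simp [(hQ _).2]⟩
  obtain ⟨G, hGd⟩ : ∃ G : (Fin n → 𝒳) × (Fin n → 𝒴) → (Fin n → Xh) → Prop, ∀ xy z, G xy z ↔
    (T⁻¹ * V xy z ≤ Qn xy.2 z ∧ ∑ i, δ1 (xy.1 i) (z i) ≤ n * (d + γ)) :=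
    ⟨_, fun _ _ => Iff.rfl⟩
  have hcov : ∀ y : Fin n → 𝒴, ∃ c : Fin m → (Fin n → Xh),
      ∑ x, iid q n (x,y) * (if ∃ k, G (x,y) (c k) then 0 else 1)
      ≤ ∑ x, iid q n (x,y) * (∑ z, if G (x,y) z then 0 else Qn y z) ^ m :=
    fun y => covering (Qn y) (hQn y) (fun x => iid q n (x,y)) (fun x => G (x,y)) m
  choose c hc using hcov
  let f : (Fin n → 𝒳) × (Fin n → 𝒴) → Fin m := fun xy =>
    if h : ∃ k, G xy (c xy.2 k) then h.choose else ⟨0, hm⟩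
  have hf : ∀ xy, (∃ k, G xy (c xy.2 k)) → G xy (c xy.2 (f xy)) := by
    intro xy h
    simp only [f, dif_pos h]
    exact h.choose_spec
  refine ⟨f, fun ky => c ky.2 ky.1, ?_⟩
  have hP0 := iid_nonneg q hq n
  have hP1 := iid_sum q hq n
  -- failure probability
  have hfail : ∑ xy : (Fin n → 𝒳) × (Fin n → 𝒴),
      iid q n xy * (if ∃ k, G xy (c xy.2 k) then 0 else 1)
      ≤ ρ₁ ^ n + ρ₂ ^ n + Real.exp (-(m * T⁻¹)) := by
    calc _ = ∑ y, ∑ x, iid q n (x,y) * (if ∃ k, G (x,y) (c y k) then 0 else 1) := by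
          rw [Fintype.sum_prod_type, Finset.sum_comm]
      _ ≤ ∑ y, ∑ x, iid q n (x,y) * (∑ z, if G (x,y) z then 0 else Qn y z) ^ m :=
          Finset.sum_le_sum fun y _ => hc y
      _ = ∑ xy : (Fin n → 𝒳) × (Fin n → 𝒴), iid q n xy *
            (∑ z, if G xy z then 0 else Qn xy.2 z) ^ m := by
          rw [Fintype.sum_prod_type, Finset.sum_comm]
      _ ≤ ∑ xy : (Fin n → 𝒳) × (Fin n → 𝒴), iid q n xy *
            ((∑ z, if G xy z then 0 else V xy z) + Real.exp (-(m * T⁻¹))) := by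
          refine Finset.sum_le_sum fun xy _ => mul_le_mul_of_nonneg_left ?_ (hP0 xy)
          exact cover_bound (Qn xy.2) (V xy) (hQn _) (hV _) (G xy) T⁻¹ (fun z h => ((hGd _ _).1 h).1) m
      _ = (∑ xy : (Fin n → 𝒳) × (Fin n → 𝒴), ∑ z, iid q n xy * (if G xy z then 0 else V xy z))
            + Real.exp (-(m * T⁻¹)) := by
          simp only [mul_add, Finset.sum_add_distrib, ← Finset.sum_mul, hP1, one_mul,
            Finset.mul_sum]
      _ ≤ (∑ xy : (Fin n → 𝒳) × (Fin n → 𝒴), ∑ z : Fin n → Xh,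
            ((∏ i, p (xy.1 i, xy.2 i, z i)) *
              (if n * (I + γ) < ∑ i, den (xy.1 i, xy.2 i, z i) then 1 else 0)
            + (∏ i, p (xy.1 i, xy.2 i, z i)) *
              (if n * (d + γ) < ∑ i, δ1 (xy.1 i) (z i) then 1 else 0)))
            + Real.exp (-(m * T⁻¹)) := by
          refine add_le_add ?_ le_rfl
          refine Finset.sum_le_sum fun xy _ => Finset.sum_le_sum fun z _ => ?_
          have hpr0 : 0 ≤ ∏ i, p (xy.1 i, xy.2 i, z i) := Finset.prod_nonneg fun _ _ => hp0 _
          have hpe : ∏ i, p (xy.1 i, xy.2 i, z i) = iid q n xy * V xy z := by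
            simp only [hp, iid, V, Finset.prod_mul_distrib]
          have hi : ∀ c : Prop, (0:ℝ) ≤ if c then (1:ℝ) else 0 := fun c => by
            split_ifs <;> norm_num
          have rhs0 := add_nonneg (mul_nonneg hpr0 (hi (n * (I + γ) < ∑ i, den (xy.1 i, xy.2 i, z i))))
            (mul_nonneg hpr0 (hi (n * (d + γ) < ∑ i, δ1 (xy.1 i) (z i))))
          by_cases hG : G xy z
          · rw [if_pos hG, mul_zero]; exact rhs0
          rw [if_neg hG, ← hpe]
          rcases hpr0.eq_or_lt with h0 | h0
          · rw [← h0]; simp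
          by_cases hb2 : n * (d + γ) < ∑ i, δ1 (xy.1 i) (z i)
          · rw [if_pos hb2, mul_one]
            exact le_add_of_nonneg_left (mul_nonneg hpr0 (hi _))
          have hb1 : n * (I + γ) < ∑ i, den (xy.1 i, xy.2 i, z i) := by
            by_contra hb1
            refine hG ((hGd _ _).2 ⟨?_, not_lt.1 hb2⟩)
            have hpi : ∀ i, 0 < p (xy.1 i, xy.2 i, z i) := fun i =>
              (hp0 _).lt_of_ne' fun h => h0.ne' (Finset.prod_eq_zero (Finset.mem_univ i) h)
            have hQpos : 0 < Qn xy.2 z := Finset.prod_pos fun i _ => (hposd _ (hpi i)).2.2.2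
            have hVpos : 0 < V xy z := Finset.prod_pos fun i _ => (hposd _ (hpi i)).2.1
            have e : ∑ i, den (xy.1 i, xy.2 i, z i) = Real.logb 2 (V xy z / Qn xy.2 z) := by
              simp only [den, V, Qn]
              rw [← Finset.prod_div_distrib, Real.logb_prod]
              intro i _
              exact (div_pos (hposd _ (hpi i)).2.1 (hposd _ (hpi i)).2.2.2).ne'
            have h5 := not_lt.1 hb1
            rw [e, Real.logb_le_iff_le_rpow (by norm_num) (div_pos hVpos hQpos), ← hT,
              div_le_iff₀ hQpos] at h5
            rw [inv_mul_le_iff₀ hT0]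
            exact h5
          rw [if_pos hb1, mul_one]
          exact le_add_of_nonneg_right (mul_nonneg hpr0 (hi _))
      _ ≤ ρ₁ ^ n + ρ₂ ^ n + Real.exp (-(m * T⁻¹)) := by
          refine add_le_add ?_ le_rfl
          simp only [Finset.sum_add_distrib]
          have t1 := sum_triple (fun a : Fin n → 𝒳 × 𝒴 × Xh => (∏ i, p (a i)) *
            (if n * (I + γ) < ∑ i, den (a i) then 1 else 0))
          have t2 := sum_triple (fun a : Fin n → 𝒳 × 𝒴 × Xh => (∏ i, p (a i)) *
            (if n * (d + γ) < ∑ i, δ1 (a i).1 (a i).2.2 then 1 else 0))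
          exact add_le_add (t1.le.trans (hc1 n)) (t2.le.trans (hc2 n))
  have hne : Nonempty 𝒳 := by
    by_contra hc
    rw [not_nonempty_iff] at hc
    have := hq.2
    simp at this
  have hdm : 0 ≤ dm := (hδ (Classical.arbitrary 𝒳) (Classical.arbitrary Xh)).1.trans
    (hδ (Classical.arbitrary 𝒳) (Classical.arbitrary Xh)).2
  have hdγ : 0 ≤ d + γ := by
    have : 0 ≤ ∑ t : 𝒳 × 𝒴 × Xh, p t * δ1 t.1 t.2.2 :=
      Finset.sum_nonneg fun t _ => mul_nonneg (hp0 t) (hδ _ _).1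
    linarith
  calc Delta1 q δ1 f (fun ky => c ky.2 ky.1)
      ≤ ∑ xy : (Fin n → 𝒳) × (Fin n → 𝒴), iid q n xy *
        (d + γ + dm * (if ∃ k, G xy (c xy.2 k) then 0 else 1)) := by
        refine Finset.sum_le_sum fun xy _ => mul_le_mul_of_nonneg_left ?_ (hP0 xy)
        rw [inv_mul_le_iff₀ hn']
        split_ifs with h
        · rw [mul_zero, add_zero]; exact ((hGd _ _).1 (hf xy h)).2
        · calc _ ≤ ∑ i : Fin n, dm := Finset.sum_le_sum fun i _ => (hδ _ _).2
            _ = n * dm := by simp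
            _ ≤ _ := by
              rw [mul_one]
              exact mul_le_mul_of_nonneg_left (by linarith) hn'.le
    _ = d + γ + dm * ∑ xy : (Fin n → 𝒳) × (Fin n → 𝒴),
        iid q n xy * (if ∃ k, G xy (c xy.2 k) then 0 else 1) := by
        simp only [mul_add, Finset.sum_add_distrib, ← Finset.sum_mul, hP1, Finset.mul_sum, one_mul]
        congr 1
        exact Finset.sum_congr rfl fun xy _ => by ring
    _ ≤ _ := by gcongr

lemma Delta2_le {𝒳 𝒴 Yh : Type} [Fintype 𝒳] [Fintype 𝒴] [Fintype Yh]
    (q : 𝒳 × 𝒴 → ℝ) (hq : IsPmf q) (δ2 : 𝒴 → Yh → ℝ) (dm : ℝ)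
    (hδ : ∀ x xh, δ2 x xh ≤ dm) {n m : ℕ} (hn : 0 < n)
    (f : (Fin n → 𝒳) × (Fin n → 𝒴) → Fin m)
    (g2 : Fin m × (Fin n → 𝒳) → Fin n → Yh) : Delta2 q δ2 f g2 ≤ dm := by
  have hn' : (0:ℝ) < n := by exact_mod_cast hn
  calc Delta2 q δ2 f g2 ≤ ∑ xy, iid q n xy * dm := by
        refine Finset.sum_le_sum fun xy _ => mul_le_mul_of_nonneg_left ?_ (iid_nonneg q hq n xy)
        rw [inv_mul_le_iff₀ hn']
        calc _ ≤ ∑ i : Fin n, dm := Finset.sum_le_sum fun i _ => hδ _ _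
            _ = n * dm := by simp
    _ = dm := by rw [← Finset.sum_mul, iid_sum q hq, one_mul]

lemma achiev {𝒳 𝒴 Xh Yh : Type} [Fintype 𝒳] [Fintype 𝒴] [Fintype Xh] [Fintype Yh] [Nonempty Xh]
    [Nonempty Yh] (q : 𝒳 × 𝒴 → ℝ) (hq : IsPmf q) (δ1 : 𝒳 → Xh → ℝ) (δ2 : 𝒴 → Yh → ℝ) (dm d2m : ℝ)
    (hδ : ∀ x xh, 0 ≤ δ1 x xh ∧ δ1 x xh ≤ dm)
    (hδ2 : ∀ x xh, δ2 x xh ≤ d2m)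
    (W : 𝒳 × 𝒴 → Xh → ℝ) (hW : IsCondPmf W) (d : ℝ)
    (hd : (∑ x, ∑ y, ∑ xh, q (x, y) * W (x, y) xh * δ1 x xh) ≤ d)
    (hI0 : 0 ≤ condMI (fun t : 𝒳 × 𝒴 × Xh => q (t.1, t.2.1) * W (t.1, t.2.1) t.2.2)) :
    RDAchievable q δ1 δ2 d d2m
      (condMI (fun t : 𝒳 × 𝒴 × Xh => q (t.1, t.2.1) * W (t.1, t.2.1) t.2.2)) := by
  intro ε hε
  obtain ⟨ρ₁, ρ₂, h10, h11, h20, h21, H⟩ := exists_code q hq δ1 dm hδ W hW d hd (ε / 4) (by positivity)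
  set I := condMI (fun t : 𝒳 × 𝒴 × Xh => q (t.1, t.2.1) * W (t.1, t.2.1) t.2.2) with hI
  set β : ℝ := (2:ℝ) ^ (ε / 4) with hβ
  have hβ1 : 1 < β := Real.one_lt_rpow (by norm_num) (by positivity)
  have t1 := tendsto_pow_atTop_nhds_zero_of_lt_one h10 h11
  have t2 := tendsto_pow_atTop_nhds_zero_of_lt_one h20 h21
  have t3 : Filter.Tendsto (fun n : ℕ => Real.exp (-(β ^ n))) Filter.atTop (nhds 0) :=
    Real.tendsto_exp_neg_atTop_nhds_zero.comp (tendsto_pow_atTop_atTop_of_one_lt hβ1)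
  have t4 := ((t1.add t2).add t3).const_mul dm
  simp only [add_zero, mul_zero] at t4
  have ev1 := t4.eventually (gt_mem_nhds (show (0:ℝ) < ε / 4 by positivity))
  have ev2 := (tendsto_inv_atTop_nhds_zero_nat (𝕜 := ℝ)).eventually
    (gt_mem_nhds (show (0:ℝ) < ε / 4 by positivity))
  obtain ⟨n, ⟨hn1, hn2⟩, hn⟩ := ((ev1.and ev2).and (Filter.eventually_gt_atTop 0)).exists
  have hn' : (0:ℝ) < n := by exact_mod_cast hn
  set T : ℝ := (2:ℝ) ^ (n * (I + ε / 4)) with hT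
  have hT0 : 0 < T := Real.rpow_pos_of_pos two_pos _
  have hT1 : 1 ≤ T := Real.one_le_rpow (by norm_num) (by positivity)
  have hβn : 1 ≤ β ^ n := one_le_pow₀ hβ1.le
  set m := ⌈T * β ^ n⌉₊ with hm
  have hm1 : T * β ^ n ≤ m := Nat.le_ceil _
  have hTβ : 1 ≤ T * β ^ n := one_le_mul_of_one_le_of_one_le hT1 hβn
  have hm2 : (m:ℝ) ≤ 2 * (T * β ^ n) := by
    have := (Nat.ceil_lt_add_one (show 0 ≤ T * β ^ n by positivity)).le
    linarith
  have hmpos' : (0:ℝ) < m := by linarith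
  have hmpos : 0 < m := by exact_mod_cast hmpos'
  obtain ⟨f, g1, hfg⟩ := H n m hn hmpos
  have hdm : 0 ≤ dm := by
    have hne : Nonempty 𝒳 := by
      by_contra hc
      rw [not_nonempty_iff] at hc
      have := hq.2
      simp at this
    exact (hδ (Classical.arbitrary 𝒳) (Classical.arbitrary Xh)).1.trans
      (hδ (Classical.arbitrary 𝒳) (Classical.arbitrary Xh)).2
  refine ⟨n, m, f, g1, fun _ _ => Classical.arbitrary Yh, hn, ?_, ?_, ?_⟩
  · have e : 2 * (T * β ^ n) = (2:ℝ) ^ (1 + n * (I + ε / 4) + ε / 4 * n) := by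
      rw [Real.rpow_add two_pos, Real.rpow_add two_pos, Real.rpow_one, hT, hβ,
        Real.rpow_mul_natCast two_pos.le, mul_assoc]
    rw [div_le_iff₀ hn', Real.logb_le_iff_le_rpow (by norm_num) hmpos']
    rw [e] at hm2
    refine hm2.trans (Real.rpow_le_rpow_of_exponent_le (by norm_num) ?_)
    have : 1 ≤ ε / 4 * n := by
      rw [inv_lt_iff_one_lt_mul₀ hn'] at hn2
      linarith
    nlinarith
  · refine hfg.trans ?_
    have h1 : Real.exp (-(m * T⁻¹)) ≤ Real.exp (-(β ^ n)) := by
      rw [Real.exp_le_exp, neg_le_neg_iff, ← div_eq_mul_inv, le_div_iff₀ hT0]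
      linarith
    have h2 : dm * (ρ₁ ^ n + ρ₂ ^ n + Real.exp (-(m * T⁻¹)))
        ≤ dm * (ρ₁ ^ n + ρ₂ ^ n + Real.exp (-(β ^ n))) := by gcongr
    linarith
  · have := Delta2_le q hq δ2 d2m hδ2 hn f (fun _ _ => Classical.arbitrary Yh)
    linarith

lemma nonempty_of_pmf {α : Type} [Fintype α] (q : α → ℝ) (hq : IsPmf q) : Nonempty α := by
  by_contra hc
  rw [not_nonempty_iff] at hc
  have := hq.2
  simp at this

lemma part1 {𝒳 𝒴 Xh Yh : Type} [Fintype 𝒳] [Fintype 𝒴] [Fintype Xh] [Fintype Yh]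
    (q : 𝒳 × 𝒴 → ℝ) (hq : IsPmf q)
    (δ1 : 𝒳 → Xh → ℝ) (δ2 : 𝒴 → Yh → ℝ) (d1max d2max : ℝ)
    (hδ1 : ∀ x xh, 0 ≤ δ1 x xh ∧ δ1 x xh ≤ d1max)
    (hδ2 : ∀ y yh, 0 ≤ δ2 y yh ∧ δ2 y yh ≤ d2max)
    (hδ1n : ∀ x, ∃ xh, δ1 x xh = 0) (hδ2n : ∀ y, ∃ yh, δ2 y yh = 0)
    (d1 : ℝ) (hd1 : 0 ≤ d1) :
    RD q δ1 δ2 d1 d2max = condRD q δ1 d1 := by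
  obtain ⟨x0, y0⟩ := (nonempty_of_pmf q hq).some
  have : Nonempty Xh := ⟨(hδ1n x0).choose⟩
  have : Nonempty Yh := ⟨(hδ2n y0).choose⟩
  have hI0 : ∀ W : 𝒳 × 𝒴 → Xh → ℝ, IsCondPmf W →
      0 ≤ condMI (fun t : 𝒳 × 𝒴 × Xh => q (t.1, t.2.1) * W (t.1, t.2.1) t.2.2) := by
    intro W hW
    refine condMI_nonneg _ ⟨fun t => mul_nonneg (hq.1 _) ((hW _).1 _), ?_⟩
    rw [← hq.2]
    simp only [Fintype.sum_prod_type, ← Finset.mul_sum, (hW _).2, mul_one]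
  have hsub : {r : ℝ | ∃ W : 𝒳 × 𝒴 → Xh → ℝ, IsCondPmf W ∧
      (∑ x, ∑ y, ∑ xh, q (x, y) * W (x, y) xh * δ1 x xh) ≤ d1 ∧
      r = condMI (fun t : 𝒳 × 𝒴 × Xh => q (t.1, t.2.1) * W (t.1, t.2.1) t.2.2)}
      ⊆ {r : ℝ | 0 ≤ r ∧ RDAchievable q δ1 δ2 d1 d2max r} := by
    rintro r ⟨W, hW, hd, rfl⟩
    exact ⟨hI0 W hW, achiev q hq δ1 δ2 d1max d2max hδ1 (fun y yh => (hδ2 y yh).2) W hW d1 hd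
      (hI0 W hW)⟩
  have hne : {r : ℝ | ∃ W : 𝒳 × 𝒴 → Xh → ℝ, IsCondPmf W ∧
      (∑ x, ∑ y, ∑ xh, q (x, y) * W (x, y) xh * δ1 x xh) ≤ d1 ∧
      r = condMI (fun t : 𝒳 × 𝒴 × Xh => q (t.1, t.2.1) * W (t.1, t.2.1) t.2.2)}.Nonempty := by
    choose z hz using hδ1n
    refine ⟨_, fun a c => if c = z a.1 then 1 else 0, ?_, ?_, rfl⟩
    · intro a
      exact ⟨fun c => by dsimp only; split_ifs <;> norm_num, by simp⟩
    · simpa [hz] using hd1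
  apply le_antisymm
  · exact csInf_le_csInf ⟨0, fun r hr => hr.1⟩ hne hsub
  · refine le_csInf (hne.mono hsub) ?_
    rintro r ⟨-, hr⟩
    obtain ⟨W, hW, hd, hI⟩ := converse q hq δ1 δ2 d1 d2max r hr
    refine le_trans ?_ hI
    unfold condRD
    refine csInf_le ⟨0, ?_⟩ ⟨W, hW, hd, rfl⟩
    rintro r ⟨W, hW, -, rfl⟩
    exact hI0 W hW

lemma achiev_swap {𝒳 𝒴 Xh Yh : Type} [Fintype 𝒳] [Fintype 𝒴] [Fintype Xh] [Fintype Yh]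
    (q : 𝒳 × 𝒴 → ℝ) (δ1 : 𝒳 → Xh → ℝ) (δ2 : 𝒴 → Yh → ℝ) (d1 d2 r : ℝ)
    (h : RDAchievable q δ1 δ2 d1 d2 r) : RDAchievable (swap q) δ2 δ1 d2 d1 r := by
  intro ε hε
  obtain ⟨n, m, f, g1, g2, hn, h1, h2, h3⟩ := h ε hε
  refine ⟨n, m, fun yx => f (yx.2, yx.1), g2, g1, hn, h1, ?_, ?_⟩
  · refine le_trans (le_of_eq ?_) h3
    exact Fintype.sum_equiv (Equiv.prodComm _ _) _ _ fun _ => rfl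
  · refine le_trans (le_of_eq ?_) h2
    exact Fintype.sum_equiv (Equiv.prodComm _ _) _ _ fun _ => rfl

lemma RD_swap {𝒳 𝒴 Xh Yh : Type} [Fintype 𝒳] [Fintype 𝒴] [Fintype Xh] [Fintype Yh]
    (q : 𝒳 × 𝒴 → ℝ) (δ1 : 𝒳 → Xh → ℝ) (δ2 : 𝒴 → Yh → ℝ) (d1 d2 : ℝ) :
    RD q δ1 δ2 d1 d2 = RD (swap q) δ2 δ1 d2 d1 := by
  unfold RD
  congr 1
  ext r
  exact and_congr_right fun _ => ⟨achiev_swap q δ1 δ2 d1 d2 r,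
    achiev_swap (swap q) δ2 δ1 d2 d1 r⟩

end TWR

open TWR in
/-- Corollary 4: at one maximal distortion the RD function
collapses to a conditional RD function: `R(d1, d2max) = R_{X|Y}(d1)` and
`R(d1max, d2) = R_{Y|X}(d2)`. -/
theorem rd_one_max_distortion
    {𝒳 𝒴 Xh Yh : Type} [Fintype 𝒳] [Fintype 𝒴] [Fintype Xh] [Fintype Yh]
    (q : 𝒳 × 𝒴 → ℝ) (hq : IsPmf q)
    (δ1 : 𝒳 → Xh → ℝ) (δ2 : 𝒴 → Yh → ℝ) (d1max d2max : ℝ)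
    (hδ1 : ∀ x xh, 0 ≤ δ1 x xh ∧ δ1 x xh ≤ d1max)
    (hδ2 : ∀ y yh, 0 ≤ δ2 y yh ∧ δ2 y yh ≤ d2max)
    (hδ1n : ∀ x, ∃ xh, δ1 x xh = 0) (hδ2n : ∀ y, ∃ yh, δ2 y yh = 0)
    (d1 d2 : ℝ) (hd1 : 0 ≤ d1) (hd2 : 0 ≤ d2) :
    RD q δ1 δ2 d1 d2max = condRD q δ1 d1 ∧
    RD q δ1 δ2 d1max d2 = condRD (swap q) δ2 d2 := by
  refine ⟨part1 q hq δ1 δ2 d1max d2max hδ1 hδ2 hδ1n hδ2n d1 hd1, ?_⟩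
  have hs : IsPmf (TWR.swap q) := by
    refine ⟨fun t => hq.1 _, ?_⟩
    rw [← hq.2]
    exact Fintype.sum_equiv (Equiv.prodComm _ _) _ _ fun _ => rfl
  rw [RD_swap]
  exact part1 (TWR.swap q) hs δ2 δ1 d2max d1max hδ2 hδ1 hδ2n hδ1n d2 hd2
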